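/- (Optimal potential for the first eigenvalue) Let 1 < p < ∞, q = p/(p−1), and let u₀ be a minimizer of J over U = (𝓗₀¹(Ω) ∩ L^{2q}(Ω)) ∖ {0}, chosen nonnegative. Define V₀ = M ‖u₀²‖_{L^q(Ω)}^{1−q} |u₀|^{2(q−1)}. Then: V₀ ∈ S_p with ‖V₀‖_{L^p(Ω)} = M; u₀ is a first eigenfunction of the potential V₀, i.e. a₁(u₀, w) + ∫_Ω V₀ u₀ w dxdy = λ₁(V₀) ∫_Ω u₀ w dxdy for all w ∈ 𝓗₀¹(Ω) ∩ L^{2q}(Ω); λ₁(V₀) = J(u₀) = sup{ λ₁(V) : V ∈ S_p }; and V₀ is the unique maximizer, i.e. any V ∈ S_p with λ₁(V) = sup_{W ∈ S_p} λ₁(W) equals V₀ almost everywhere. -/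

import Mathlib

open MeasureTheory Set Filter

noncomputable section

/-- The open unit square `Ω = (0,1) × (0,1)` in `ℝ²`. -/
def Omega : Set (ℝ × ℝ) := Ioo (0:ℝ) 1 ×ˢ Ioo (0:ℝ) 1

/-- Test functions on a set `s`: smooth with compact support contained in `s`. -/
def IsTestOn (s : Set (ℝ × ℝ)) (φ : ℝ × ℝ → ℝ) : Prop :=
  ContDiff ℝ (⊤ : ℕ∞) φ ∧ HasCompactSupport φ ∧ tsupport φ ⊆ s

/-- Classical partial derivative in the `x`-direction. -/
def pdx (φ : ℝ × ℝ → ℝ) (p : ℝ × ℝ) : ℝ := fderiv ℝ φ p (1, 0)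

/-- Classical partial derivative in the `y`-direction. -/
def pdy (φ : ℝ × ℝ → ℝ) (p : ℝ × ℝ) : ℝ := fderiv ℝ φ p (0, 1)

/-- `g` is a weak `x`-partial derivative of `u` on `s`. -/
def HasWeakDerivXOn (s : Set (ℝ × ℝ)) (u g : ℝ × ℝ → ℝ) : Prop :=
  LocallyIntegrableOn u s volume ∧ LocallyIntegrableOn g s volume ∧
  ∀ φ : ℝ × ℝ → ℝ, IsTestOn s φ →
    ∫ p in s, u p * pdx φ p = - ∫ p in s, g p * φ p

/-- `g` is a weak `y`-partial derivative of `u` on `s`. -/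
def HasWeakDerivYOn (s : Set (ℝ × ℝ)) (u g : ℝ × ℝ → ℝ) : Prop :=
  LocallyIntegrableOn u s volume ∧ LocallyIntegrableOn g s volume ∧
  ∀ φ : ℝ × ℝ → ℝ, IsTestOn s φ →
    ∫ p in s, u p * pdy φ p = - ∫ p in s, g p * φ p

/-- Test functions on `Ω`. -/
def IsTest (φ : ℝ × ℝ → ℝ) : Prop := IsTestOn Omega φ

/-- Membership in the weighted Sobolev space `𝓗¹(Ω)`, with weak derivatives `gx, gy`:
`u ∈ L²(Ω)`, `gx = ∂ₓu`, `gy = ∂_y u` weakly, and `y^α₁ gx, x^α₂ gy ∈ L²(Ω)`. -/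
structure MemH1 (α₁ α₂ : ℝ) (u gx gy : ℝ × ℝ → ℝ) : Prop where
  memL2 : MemLp u 2 (volume.restrict Omega)
  weakX : HasWeakDerivXOn Omega u gx
  weakY : HasWeakDerivYOn Omega u gy
  wgx : MemLp (fun p => p.2 ^ α₁ * gx p) 2 (volume.restrict Omega)
  wgy : MemLp (fun p => p.1 ^ α₂ * gy p) 2 (volume.restrict Omega)

/-- The `𝓗¹(Ω)` norm of `u` (with weak derivatives `gx, gy`). -/
def H1Norm (α₁ α₂ : ℝ) (u gx gy : ℝ × ℝ → ℝ) : ℝ :=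
  Real.sqrt ((∫ p in Omega, (u p) ^ 2) +
    (∫ p in Omega, (p.2 ^ α₁ * gx p) ^ 2) +
    (∫ p in Omega, (p.1 ^ α₂ * gy p) ^ 2))

/-- Membership in `𝓗₀¹(Ω)`: member of `𝓗¹(Ω)` approximable in the `𝓗¹` norm by
test functions. -/
def MemH10 (α₁ α₂ : ℝ) (u gx gy : ℝ × ℝ → ℝ) : Prop :=
  MemH1 α₁ α₂ u gx gy ∧
  ∀ ε : ℝ, 0 < ε → ∃ φ : ℝ × ℝ → ℝ, IsTest φ ∧
    H1Norm α₁ α₂ (fun p => u p - φ p) (fun p => gx p - pdx φ p)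
      (fun p => gy p - pdy φ p) < ε

/-- Membership in `H₀(Ω) = {u ∈ 𝓗₀¹(Ω) : ∫_Ω V u² < ∞}`. -/
def MemH0 (α₁ α₂ : ℝ) (V u gx gy : ℝ × ℝ → ℝ) : Prop :=
  MemH10 α₁ α₂ u gx gy ∧
  IntegrableOn (fun p => V p * (u p) ^ 2) Omega volume

/-- The bilinear form `a(u,v)` associated with the sub-elliptic operator with potential `V`. -/
def aForm (α₁ α₂ : ℝ) (V u gx gy v hx hy : ℝ × ℝ → ℝ) : ℝ :=
  ∫ p in Omega, ((p.2 ^ α₁ * gx p) * (p.2 ^ α₁ * hx p) +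
    (p.1 ^ α₂ * gy p) * (p.1 ^ α₂ * hy p) + V p * u p * v p)

/-- The bilinear form `a₁(u,v)` (no potential). -/
def a1Form (α₁ α₂ : ℝ) (u gx gy v hx hy : ℝ × ℝ → ℝ) : ℝ :=
  ∫ p in Omega, ((p.2 ^ α₁ * gx p) * (p.2 ^ α₁ * hx p) +
    (p.1 ^ α₂ * gy p) * (p.1 ^ α₂ * hy p))

/-- Membership in `S_p = {V ∈ L^p(Ω) : V ≥ 0 a.e., ‖V‖_{L^p(Ω)} ≤ M}`. -/
def MemSp (ppow M : ℝ) (V : ℝ × ℝ → ℝ) : Prop :=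
  MemLp V (ENNReal.ofReal ppow) (volume.restrict Omega) ∧
  (∀ᵐ p ∂(volume.restrict Omega), 0 ≤ V p) ∧
  eLpNorm V (ENNReal.ofReal ppow) (volume.restrict Omega) ≤ ENNReal.ofReal M

/-- `u` (with weak derivatives `gx, gy`) is an eigenfunction of the sub-elliptic operator
with potential `V` for the eigenvalue `lam`. -/
def IsEigenfun (α₁ α₂ : ℝ) (V : ℝ × ℝ → ℝ) (lam : ℝ) (u gx gy : ℝ × ℝ → ℝ) : Prop :=
  MemH0 α₁ α₂ V u gx gy ∧
  ∀ v hx hy : ℝ × ℝ → ℝ, MemH0 α₁ α₂ V v hx hy →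
    aForm α₁ α₂ V u gx gy v hx hy = lam * ∫ p in Omega, u p * v p

/-- The first eigenvalue `λ₁(V) = inf { a(u,u) : u ∈ H₀(Ω), ‖u‖_{L²} = 1 }`. -/
def lam1 (α₁ α₂ : ℝ) (V : ℝ × ℝ → ℝ) : ℝ :=
  sInf { r | ∃ u gx gy : ℝ × ℝ → ℝ, MemH0 α₁ α₂ V u gx gy ∧
    (∫ p in Omega, (u p) ^ 2) = 1 ∧ r = aForm α₁ α₂ V u gx gy u gx gy }

/-- `sup { a(u,u) : u ∈ span(φ), ‖u‖_{L²(Ω)} = 1 }` for a finite family `φ` with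
weak derivatives `φx, φy`. -/
def rayleighSup (α₁ α₂ : ℝ) (V : ℝ × ℝ → ℝ) {k : ℕ} (φ φx φy : Fin k → ℝ × ℝ → ℝ) : ℝ :=
  sSup { s | ∃ c : Fin k → ℝ,
    (∫ p in Omega, (∑ i, c i * φ i p) ^ 2) = 1 ∧
    s = aForm α₁ α₂ V (fun p => ∑ i, c i * φ i p) (fun p => ∑ i, c i * φx i p)
      (fun p => ∑ i, c i * φy i p) (fun p => ∑ i, c i * φ i p)
      (fun p => ∑ i, c i * φx i p) (fun p => ∑ i, c i * φy i p) }

/-- The set of values `sup { a(u,u) : u ∈ E, ‖u‖ = 1 }` over `k`-dimensional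
subspaces `E` of `H₀(Ω)` (represented by `L²(Ω)`-linearly independent families of
`k` elements of `H₀(Ω)`). -/
def minmaxSet (α₁ α₂ : ℝ) (V : ℝ × ℝ → ℝ) (k : ℕ) : Set ℝ :=
  { r | ∃ φ φx φy : Fin k → ℝ × ℝ → ℝ,
      (∀ i, MemH0 α₁ α₂ V (φ i) (φx i) (φy i)) ∧
      (∀ c : Fin k → ℝ, (∀ᵐ p ∂(volume.restrict Omega), ∑ i, c i * φ i p = 0) → c = 0) ∧
      r = rayleighSup α₁ α₂ V φ φx φy }

/-- The `k`-th eigenvalue via the min-max principle. -/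
def lamk (α₁ α₂ : ℝ) (V : ℝ × ℝ → ℝ) (k : ℕ) : ℝ := sInf (minmaxSet α₁ α₂ V k)

/-- Membership in `U = (𝓗₀¹(Ω) ∩ L^{2q}(Ω)) \ {0}`. -/
def MemU (α₁ α₂ qe : ℝ) (u gx gy : ℝ × ℝ → ℝ) : Prop :=
  MemH10 α₁ α₂ u gx gy ∧
  MemLp u (ENNReal.ofReal (2 * qe)) (volume.restrict Omega) ∧
  ¬ (∀ᵐ p ∂(volume.restrict Omega), u p = 0)

/-- The functional `J(u) = (a₁(u,u) + M ‖u‖_{L^{2q}(Ω)}²) / ‖u‖_{L²(Ω)}²`. -/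
def Jfun (α₁ α₂ M qe : ℝ) (u gx gy : ℝ × ℝ → ℝ) : ℝ :=
  (a1Form α₁ α₂ u gx gy u gx gy +
    M * (∫ p in Omega, |u p| ^ (2 * qe)) ^ (1 / qe)) / (∫ p in Omega, (u p) ^ 2)


/-- Energy. -/
def En (α₁ α₂ : ℝ) (gx gy : ℝ × ℝ → ℝ) : ℝ :=
  ∫ p in Omega, ((p.2 ^ α₁ * gx p) ^ 2 + (p.1 ^ α₂ * gy p) ^ 2)

instance finOmega : IsFiniteMeasure (volume.restrict Omega) := by
  constructor
  rw [Measure.restrict_apply_univ]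
  have : Omega ⊆ Icc (0:ℝ) 1 ×ˢ Icc (0:ℝ) 1 :=
    Set.prod_mono Ioo_subset_Icc_self Ioo_subset_Icc_self
  exact lt_of_le_of_lt (measure_mono this)
    ((isCompact_Icc.prod isCompact_Icc).measure_lt_top)

lemma measOmega : MeasurableSet Omega := measurableSet_Ioo.prod measurableSet_Ioo

lemma IsTest.cont {φ : ℝ × ℝ → ℝ} (h : IsTest φ) : Continuous φ := h.1.continuous

lemma IsTest.diff {φ : ℝ × ℝ → ℝ} (h : IsTest φ) : Differentiable ℝ φ :=
  h.1.differentiable (by simp)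

lemma IsTest.cont_fd {φ : ℝ × ℝ → ℝ} (h : IsTest φ) (v : ℝ × ℝ) :
    Continuous (fun p => fderiv ℝ φ p v) :=
  (h.1.continuous_fderiv (by simp)).clm_apply continuous_const

lemma IsTest.memLp {φ : ℝ × ℝ → ℝ} (h : IsTest φ) (r : ENNReal) :
    MemLp φ r (volume.restrict Omega) :=
  h.cont.memLp_of_hasCompactSupport h.2.1

lemma IsTest.wx {φ : ℝ × ℝ → ℝ} (h : IsTest φ) {α : ℝ} (hα : 0 < α) (r : ENNReal) :
    MemLp (fun p => p.2 ^ α * pdx φ p) r (volume.restrict Omega) := by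
  apply Continuous.memLp_of_hasCompactSupport
  · exact (continuous_snd.rpow_const (fun _ => Or.inr hα.le)).mul (h.cont_fd _)
  · exact (h.2.1.fderiv_apply ℝ (1,0)).mul_left

lemma IsTest.wy {φ : ℝ × ℝ → ℝ} (h : IsTest φ) {α : ℝ} (hα : 0 < α) (r : ENNReal) :
    MemLp (fun p => p.1 ^ α * pdy φ p) r (volume.restrict Omega) := by
  apply Continuous.memLp_of_hasCompactSupport
  · exact (continuous_fst.rpow_const (fun _ => Or.inr hα.le)).mul (h.cont_fd _)
  · exact (h.2.1.fderiv_apply ℝ (0,1)).mul_left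

lemma IsTest.ibp {φ η : ℝ × ℝ → ℝ} (h : IsTest φ) (hη : IsTest η) (v : ℝ × ℝ) :
    ∫ p in Omega, φ p * fderiv ℝ η p v = - ∫ p in Omega, fderiv ℝ φ p v * η p := by
  rw [setIntegral_eq_integral_of_forall_compl_eq_zero, setIntegral_eq_integral_of_forall_compl_eq_zero]
  · apply integral_mul_fderiv_eq_neg_fderiv_mul_of_integrable
    · exact ((h.cont_fd v).mul hη.cont).integrable_of_hasCompactSupport hη.2.1.mul_left
    · exact (h.cont.mul (hη.cont_fd v)).integrable_of_hasCompactSupport h.2.1.mul_right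
    · exact (h.cont.mul hη.cont).integrable_of_hasCompactSupport h.2.1.mul_right
    · exact fun x _ => h.diff x
    · exact fun x _ => hη.diff x
  · intro x hx
    rw [image_eq_zero_of_notMem_tsupport (fun hh => hx (hη.2.2 hh)), mul_zero]
  · intro x hx
    rw [image_eq_zero_of_notMem_tsupport (fun hh => hx (h.2.2 hh)), zero_mul]

lemma IsTest.memH10 {φ : ℝ × ℝ → ℝ} (h : IsTest φ) {α₁ α₂ : ℝ} (h1 : 0 < α₁) (h2 : 0 < α₂) :
    MemH10 α₁ α₂ φ (pdx φ) (pdy φ) := by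
  refine ⟨⟨h.memLp 2, ⟨?_, ?_, ?_⟩, ⟨?_, ?_, ?_⟩, h.wx h1 2, h.wy h2 2⟩, ?_⟩
  · exact h.cont.locallyIntegrable.locallyIntegrableOn _
  · exact (h.cont_fd _).locallyIntegrable.locallyIntegrableOn _
  · exact fun η hη => h.ibp hη _
  · exact h.cont.locallyIntegrable.locallyIntegrableOn _
  · exact (h.cont_fd _).locallyIntegrable.locallyIntegrableOn _
  · exact fun η hη => h.ibp hη _
  · intro ε hε
    exact ⟨φ, h, by simpa [H1Norm] using hε⟩

lemma IsTest.lin {φ χ : ℝ × ℝ → ℝ} (h : IsTest φ) (h' : IsTest χ) (a b : ℝ) :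
    IsTest (fun p => a * φ p + b * χ p) := by
  refine ⟨(contDiff_const.mul h.1).add (contDiff_const.mul h'.1), ?_, ?_⟩
  · exact (h.2.1.mul_left (f := fun _ => a)).add (h'.2.1.mul_left (f := fun _ => b))
  · refine (tsupport_add _ _).trans (union_subset ?_ ?_)
    · exact (tsupport_mul_subset_right (f := fun _ => a)).trans h.2.2
    · exact (tsupport_mul_subset_right (f := fun _ => b)).trans h'.2.2

lemma fd_lin {φ χ : ℝ × ℝ → ℝ} (h : IsTest φ) (h' : IsTest χ) (a b : ℝ) (p v : ℝ × ℝ) :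
    fderiv ℝ (fun p => a * φ p + b * χ p) p v = a * fderiv ℝ φ p v + b * fderiv ℝ χ p v := by
  have := ((h.diff p).hasFDerivAt.const_mul a).add ((h'.diff p).hasFDerivAt.const_mul b)
  have h3 := this.fderiv
  change fderiv ℝ (fun p => a * φ p + b * χ p) p = _ at h3
  rw [h3]
  simp

lemma sq_int_lin {f g : ℝ × ℝ → ℝ} {μ : Measure (ℝ × ℝ)} (hf : MemLp f 2 μ) (hg : MemLp g 2 μ) (a b : ℝ) :
    ∫ p, (a * f p + b * g p) ^ 2 ∂μ ≤ 2 * a^2 * ∫ p, f p ^ 2 ∂μ + 2 * b^2 * ∫ p, g p ^ 2 ∂μ := by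
  rw [← integral_const_mul, ← integral_const_mul, ← integral_add]
  · apply integral_mono
    · exact ((hf.const_mul a).add (hg.const_mul b)).integrable_sq
    · exact (hf.integrable_sq.const_mul _).add (hg.integrable_sq.const_mul _)
    · intro p
      simp only
      nlinarith [sq_nonneg (a * f p - b * g p)]
  · exact (hf.integrable_sq.const_mul _)
  · exact (hg.integrable_sq.const_mul _)

lemma weak_lin_aux {s : Set (ℝ × ℝ)} (hs : MeasurableSet s) {u w η : ℝ × ℝ → ℝ} (hu : LocallyIntegrableOn u s)
    (hw : LocallyIntegrableOn w s) (hc : Continuous η) (hη : HasCompactSupport η)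
    (hη' : tsupport η ⊆ s) (a b : ℝ) :
    ∫ p in s, (a * u p + b * w p) * η p = a * (∫ p in s, u p * η p) + b * (∫ p in s, w p * η p) := by
  have key : ∀ {f : ℝ × ℝ → ℝ}, LocallyIntegrableOn f s → IntegrableOn (fun p => f p * η p) s := by
    intro f hf
    have h1 : IntegrableOn f (tsupport η) := hf.integrableOn_compact_subset hη' hη.isCompact
    have h2 : IntegrableOn (fun p => f p * η p) (tsupport η) :=
      h1.mul_continuousOn hc.continuousOn hη.isCompact
    refine IntegrableOn.of_forall_sdiff_eq_zero h2 hs ?_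
    intro x hx
    rw [image_eq_zero_of_notMem_tsupport hx.2, mul_zero]
  rw [← integral_const_mul, ← integral_const_mul, ← integral_add]
  · congr 1; ext p; ring
  · exact (key hu).const_mul a
  · exact (key hw).const_mul b

lemma MemH10.lin {α₁ α₂ : ℝ} (h1 : 0 < α₁) (h2 : 0 < α₂) {u gx gy w wx wy : ℝ × ℝ → ℝ}
    (hu : MemH10 α₁ α₂ u gx gy) (hw : MemH10 α₁ α₂ w wx wy) (a b : ℝ) :
    MemH10 α₁ α₂ (fun p => a * u p + b * w p) (fun p => a * gx p + b * wx p)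
      (fun p => a * gy p + b * wy p) := by
  obtain ⟨⟨hu2, hux, huy, hugx, hugy⟩, hua⟩ := hu
  obtain ⟨⟨hw2, hwx, hwy, hwgx, hwgy⟩, hwa⟩ := hw
  have loc : ∀ {f g : ℝ × ℝ → ℝ}, LocallyIntegrableOn f Omega → LocallyIntegrableOn g Omega →
      LocallyIntegrableOn (fun p => a * f p + b * g p) Omega := by
    intro f g hf hg
    exact (hf.smul a).add (hg.smul b)
  refine ⟨⟨(hu2.const_mul a).add (hw2.const_mul b), ⟨loc hux.1 hwx.1, loc hux.2.1 hwx.2.1, ?_⟩,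
    ⟨loc huy.1 hwy.1, loc huy.2.1 hwy.2.1, ?_⟩, ?_, ?_⟩, ?_⟩
  · intro η hη
    have e := hux.2.2 η hη
    have e' := hwx.2.2 η hη
    simp only [pdx] at e e' ⊢
    rw [weak_lin_aux measOmega hux.1 hwx.1 (IsTest.cont_fd hη _) (hη.2.1.fderiv_apply ℝ (1,0)) 
        ((tsupport_fderiv_apply_subset ℝ _).trans hη.2.2),
      weak_lin_aux measOmega hux.2.1 hwx.2.1 (IsTest.cont hη) hη.2.1 hη.2.2, e, e']
    ring
  · intro η hη
    have e := huy.2.2 η hη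
    have e' := hwy.2.2 η hη
    simp only [pdy] at e e' ⊢
    rw [weak_lin_aux measOmega huy.1 hwy.1 (IsTest.cont_fd hη _) (hη.2.1.fderiv_apply ℝ (0,1)) 
        ((tsupport_fderiv_apply_subset ℝ _).trans hη.2.2),
      weak_lin_aux measOmega huy.2.1 hwy.2.1 (IsTest.cont hη) hη.2.1 hη.2.2, e, e']
    ring
  · convert (hugx.const_mul a).add (hwgx.const_mul b) using 1
    ext p; simp; ring
  · convert (hugy.const_mul a).add (hwgy.const_mul b) using 1
    ext p; simp; ring
  · intro ε hε
    set δ : ℝ := ε / (2 * (1 + a^2 + b^2)) with hδ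
    have hc : 0 < 1 + a^2 + b^2 := by positivity
    have hδ0 : 0 < δ := by positivity
    obtain ⟨φ, hφ, hφn⟩ := hua δ hδ0
    obtain ⟨χ, hχ, hχn⟩ := hwa δ hδ0
    refine ⟨_, hφ.lin hχ a b, ?_⟩
    unfold H1Norm at *
    rw [Real.sqrt_lt' hε]
    rw [Real.sqrt_lt' hδ0] at hφn hχn
    have e1 := sq_int_lin (hu2.sub (hφ.memLp 2)) (hw2.sub (hχ.memLp 2)) a b
    have e2 := sq_int_lin (hugx.sub (hφ.wx h1 2)) (hwgx.sub (hχ.wx h1 2)) a b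
    have e3 := sq_int_lin (hugy.sub (hφ.wy h2 2)) (hwgy.sub (hχ.wy h2 2)) a b
    simp only [Pi.sub_apply, ← mul_sub] at e1 e2 e3
    have r1 : (fun p : ℝ × ℝ => (a * u p + b * w p - (a * φ p + b * χ p))^2) =
      fun p => (a * (u p - φ p) + b * (w p - χ p))^2 := by ext p; ring
    have r2 : (fun p : ℝ × ℝ => (p.2 ^ α₁ * (a * gx p + b * wx p - pdx (fun p => a * φ p + b * χ p) p))^2) =
      fun p => (a * (p.2 ^ α₁ * (gx p - pdx φ p)) + b * (p.2 ^ α₁ * (wx p - pdx χ p)))^2 := by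
      ext p; rw [pdx, fd_lin hφ hχ]; simp only [pdx]; ring
    have r3 : (fun p : ℝ × ℝ => (p.1 ^ α₂ * (a * gy p + b * wy p - pdy (fun p => a * φ p + b * χ p) p))^2) =
      fun p => (a * (p.1 ^ α₂ * (gy p - pdy φ p)) + b * (p.1 ^ α₂ * (wy p - pdy χ p)))^2 := by
      ext p; rw [pdy, fd_lin hφ hχ]; simp only [pdy]; ring
    rw [r1, r2, r3]
    have hfin : 2 * a^2 * δ^2 + 2 * b^2 * δ^2 < ε^2 := by
      have : ε = δ * (2 * (1 + a^2 + b^2)) := by rw [hδ]; field_simp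
      rw [this]
      have : 0 < δ^2 := by positivity
      nlinarith [sq_nonneg a, sq_nonneg b, mul_pos this hc, mul_nonneg this.le (sq_nonneg (1+a^2+b^2)), mul_nonneg this.le (sq_nonneg a), mul_nonneg this.le (sq_nonneg b), mul_nonneg this.le (sq_nonneg (a^2+b^2))]
    have := mul_le_mul_of_nonneg_left hφn.le (by positivity : 0 ≤ 2 * a^2)
    have := mul_le_mul_of_nonneg_left hχn.le (by positivity : 0 ≤ 2 * b^2)
    linarith


lemma En_integrable {α₁ α₂ : ℝ} {gx gy : ℝ × ℝ → ℝ}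
    (hx : MemLp (fun p => p.2 ^ α₁ * gx p) 2 (volume.restrict Omega))
    (hy : MemLp (fun p => p.1 ^ α₂ * gy p) 2 (volume.restrict Omega)) :
    Integrable (fun p => (p.2 ^ α₁ * gx p) ^ 2 + (p.1 ^ α₂ * gy p) ^ 2) (volume.restrict Omega) :=
  hx.integrable_sq.add hy.integrable_sq

lemma En_nonneg (α₁ α₂ : ℝ) (gx gy : ℝ × ℝ → ℝ) : 0 ≤ En α₁ α₂ gx gy :=
  integral_nonneg (fun p => by positivity)

lemma IsTest.trunc {φ : ℝ × ℝ → ℝ} (h : IsTest φ) (σ k : ℝ) :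
    IsTest (fun p => σ * (k * Real.sin (φ p / k))) := by
  have hsub : tsupport (fun p => σ * (k * Real.sin (φ p / k))) ⊆ tsupport φ := by
    apply closure_mono
    intro x hx
    rw [Function.mem_support] at hx ⊢
    contrapose! hx
    simp [hx]
  refine ⟨?_, ?_, hsub.trans h.2.2⟩
  · exact contDiff_const.mul (contDiff_const.mul (Real.contDiff_sin.comp (h.1.div_const k)))
  · exact h.2.1.of_isClosed_subset (isClosed_tsupport _) hsub

lemma fd_trunc {φ : ℝ × ℝ → ℝ} (h : IsTest φ) (σ : ℝ) {k : ℝ} (hk : 0 < k) (p v : ℝ × ℝ) :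
    (fderiv ℝ (fun p => σ * (k * Real.sin (φ p / k))) p v) =
      σ * Real.cos (φ p / k) * fderiv ℝ φ p v := by
  have h1 : HasFDerivAt (fun p => φ p * k⁻¹) (k⁻¹ • fderiv ℝ φ p) p :=
    (h.diff p).hasFDerivAt.mul_const k⁻¹
  have h2 := ((h1.sin).const_mul k).const_mul σ
  have h3 := h2.fderiv
  simp only [← div_eq_mul_inv] at h3
  rw [h3]
  simp
  field_simp

lemma IsTest.comb {f g : ℝ × ℝ → ℝ} (hf : IsTest f) (hg : IsTest g) {ε : ℝ} (hε : 0 < ε) :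
    IsTest (fun p => Real.sqrt (f p ^ 2 + g p ^ 2 + ε ^ 2) - ε) := by
  have hsub : tsupport (fun p => Real.sqrt (f p ^ 2 + g p ^ 2 + ε ^ 2) - ε) ⊆ tsupport f ∪ tsupport g := by
    refine closure_minimal ?_ ((isClosed_tsupport _).union (isClosed_tsupport _))
    intro x hx
    by_contra hcon
    simp only [mem_union, not_or] at hcon
    apply hx
    simp only
    rw [image_eq_zero_of_notMem_tsupport hcon.1, image_eq_zero_of_notMem_tsupport hcon.2]
    simp [Real.sqrt_sq hε.le]
  refine ⟨?_, ?_, hsub.trans (union_subset hf.2.2 hg.2.2)⟩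
  · refine ContDiff.sub (ContDiff.sqrt (((hf.1.pow 2).add (hg.1.pow 2)).add contDiff_const) ?_) contDiff_const
    intro x
    positivity
  · exact (hf.2.1.isCompact.union hg.2.1.isCompact).of_isClosed_subset (isClosed_tsupport _) hsub

lemma fd_comb {f g : ℝ × ℝ → ℝ} (hf : IsTest f) (hg : IsTest g) {ε : ℝ} (hε : 0 < ε) (p v : ℝ × ℝ) :
    fderiv ℝ (fun p => Real.sqrt (f p ^ 2 + g p ^ 2 + ε ^ 2) - ε) p v =
      (f p * fderiv ℝ f p v + g p * fderiv ℝ g p v) / Real.sqrt (f p ^ 2 + g p ^ 2 + ε ^ 2) := by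
  have h1 : HasFDerivAt (fun p => f p ^ 2 + g p ^ 2 + ε ^ 2) _ p :=
    ((((hf.diff p).hasFDerivAt.pow 2)).add ((hg.diff p).hasFDerivAt.pow 2)).add_const (ε^2)
  have h2 := (h1.sqrt (by positivity)).sub_const ε
  rw [h2.fderiv]
  have : 0 < Real.sqrt (f p ^ 2 + g p ^ 2 + ε ^ 2) := Real.sqrt_pos.mpr (by positivity)
  simp
  field_simp

lemma comb_sq_le (a b ε x y : ℝ) (hε : 0 < ε) :
    ((a * x + b * y) / Real.sqrt (a ^ 2 + b ^ 2 + ε ^ 2)) ^ 2 ≤ x ^ 2 + y ^ 2 := by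
  rw [div_pow, Real.sq_sqrt (by positivity), div_le_iff₀ (by positivity)]
  nlinarith [sq_nonneg (a * y - b * x), mul_nonneg (add_nonneg (sq_nonneg x) (sq_nonneg y)) (sq_nonneg ε)]

lemma comb_abs (a b ε : ℝ) (hε : 0 < ε) :
    0 ≤ Real.sqrt (a ^ 2 + b ^ 2 + ε ^ 2) - ε ∧
    (Real.sqrt (a ^ 2 + b ^ 2 + ε ^ 2) - ε) ^ 2 ≤ a ^ 2 + b ^ 2 := by
  have h0 : ε ≤ Real.sqrt (a ^ 2 + b ^ 2 + ε ^ 2) := Real.le_sqrt_of_sq_le (by nlinarith [sq_nonneg a, sq_nonneg b])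
  have h1 := Real.sq_sqrt (by positivity : 0 ≤ a ^ 2 + b ^ 2 + ε ^ 2)
  exact ⟨by linarith, by nlinarith⟩

lemma abs_rpow_two_mul (x q : ℝ) : |x| ^ (2 * q) = (x ^ 2) ^ q := by
  rw [Real.rpow_mul (abs_nonneg x)]; norm_num

/-- first inequality on test functions -/
def TestIneq (α₁ α₂ c M q : ℝ) : Prop :=
  ∀ ψ, IsTest ψ → c * (∫ p in Omega, ψ p ^ 2) ≤ En α₁ α₂ (pdx ψ) (pdy ψ) +
    M * (∫ p in Omega, |ψ p| ^ (2 * q)) ^ (1 / q)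

lemma IsTest.int_sq_add {f g : ℝ × ℝ → ℝ} (hf : IsTest f) (hg : IsTest g) {q : ℝ} (hq : 0 < q) :
    Integrable (fun p => (f p ^ 2 + g p ^ 2) ^ q) (volume.restrict Omega) := by
  have hc : Continuous (fun p => (f p ^ 2 + g p ^ 2) ^ q) :=
    ((hf.cont.pow 2).add (hg.cont.pow 2)).rpow_const (fun _ => Or.inr hq.le)
  refine Integrable.mono_measure ?_ Measure.restrict_le_self
  apply hc.integrable_of_hasCompactSupport
  refine (hf.2.1.isCompact.union hg.2.1.isCompact).of_isClosed_subset (isClosed_tsupport _) ?_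
  refine closure_minimal ?_ ((isClosed_tsupport _).union (isClosed_tsupport _))
  intro x hx
  by_contra hcon
  simp only [mem_union, not_or] at hcon
  apply hx
  simp only
  rw [image_eq_zero_of_notMem_tsupport hcon.1, image_eq_zero_of_notMem_tsupport hcon.2]
  simp [Real.zero_rpow hq.ne']

lemma test_ineq2 {α₁ α₂ c M q : ℝ} (h1 : 0 < α₁) (h2 : 0 < α₂) (hM : 0 ≤ M) (hq : 0 < q)
    (H : TestIneq α₁ α₂ c M q) {f g : ℝ × ℝ → ℝ} (hf : IsTest f) (hg : IsTest g) :
    c * (∫ p in Omega, (f p ^ 2 + g p ^ 2)) ≤ En α₁ α₂ (pdx f) (pdy f) + En α₁ α₂ (pdx g) (pdy g) +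
      M * (∫ p in Omega, (f p ^ 2 + g p ^ 2) ^ q) ^ (1 / q) := by
  have main : ∀ ε : ℝ, 0 < ε →
      c * (∫ p in Omega, (Real.sqrt (f p ^ 2 + g p ^ 2 + ε ^ 2) - ε) ^ 2) ≤
      En α₁ α₂ (pdx f) (pdy f) + En α₁ α₂ (pdx g) (pdy g) +
      M * (∫ p in Omega, (f p ^ 2 + g p ^ 2) ^ q) ^ (1 / q) := by
    intro ε hε
    have hψ := hf.comb hg hε
    refine (H _ hψ).trans (add_le_add ?_ (mul_le_mul_of_nonneg_left (Real.rpow_le_rpow ?_ ?_ (by positivity)) hM))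
    · unfold En
      rw [← integral_add (En_integrable (hf.wx h1 2) (hf.wy h2 2)) (En_integrable (hg.wx h1 2) (hg.wy h2 2))]
      apply integral_mono (En_integrable (hψ.wx h1 2) (hψ.wy h2 2))
        ((En_integrable (hf.wx h1 2) (hf.wy h2 2)).add (En_integrable (hg.wx h1 2) (hg.wy h2 2)))
      intro p
      simp only [pdx, pdy, fd_comb hf hg hε, mul_pow, Pi.add_apply]
      have e1 := mul_le_mul_of_nonneg_left (comb_sq_le (f p) (g p) ε (fderiv ℝ f p (1,0)) (fderiv ℝ g p (1,0)) hε) (sq_nonneg (p.2 ^ α₁))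
      have e2 := mul_le_mul_of_nonneg_left (comb_sq_le (f p) (g p) ε (fderiv ℝ f p (0,1)) (fderiv ℝ g p (0,1)) hε) (sq_nonneg (p.1 ^ α₂))
      linarith
    · exact integral_nonneg (fun p => by positivity)
    · apply integral_mono_of_nonneg (ae_of_all _ fun p => by positivity) (hf.int_sq_add hg hq)
      refine ae_of_all _ fun p => ?_
      simp only
      rw [abs_rpow_two_mul]
      exact Real.rpow_le_rpow (by positivity) (comb_abs _ _ _ hε).2 hq.le
  have hlim : Tendsto (fun n : ℕ => ∫ p in Omega, (Real.sqrt (f p ^ 2 + g p ^ 2 + (1 / ((n:ℝ) + 1)) ^ 2) - (1 / ((n:ℝ) + 1))) ^ 2)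
      atTop (nhds (∫ p in Omega, (f p ^ 2 + g p ^ 2))) := by
    apply tendsto_integral_of_dominated_convergence (fun p => f p ^ 2 + g p ^ 2)
    · intro n
      exact ((hf.comb hg (ε := 1 / ((n:ℝ) + 1)) (by positivity)).cont.pow 2).aestronglyMeasurable
    · exact ((hf.memLp 2).integrable_sq).add ((hg.memLp 2).integrable_sq)
    · intro n
      refine ae_of_all _ fun p => ?_
      rw [Real.norm_of_nonneg (by positivity)]
      exact (comb_abs _ _ _ (by positivity)).2
    · refine ae_of_all _ fun p => ?_
      have hc : Continuous (fun ε : ℝ => (Real.sqrt (f p ^ 2 + g p ^ 2 + ε ^ 2) - ε) ^ 2) := by fun_prop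
      have := (hc.tendsto 0).comp tendsto_one_div_add_atTop_nhds_zero_nat
      simpa [Function.comp_def, Real.sq_sqrt (by positivity : 0 ≤ f p ^ 2 + g p ^ 2)] using this
  exact le_of_tendsto (hlim.const_mul c) (Eventually.of_forall fun n => main _ (by positivity))

lemma approx {α₁ α₂ : ℝ} (h1 : 0 < α₁) (h2 : 0 < α₂) {u gx gy : ℝ × ℝ → ℝ} (hu : MemH10 α₁ α₂ u gx gy) :
    ∃ φ : ℕ → ℝ × ℝ → ℝ, (∀ n, IsTest (φ n)) ∧
      (∀ᵐ p ∂(volume.restrict Omega), Tendsto (fun n => φ n p) atTop (nhds (u p))) ∧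
      ∃ b : ℕ → ℝ, (∀ n, En α₁ α₂ (pdx (φ n)) (pdy (φ n)) ≤ b n) ∧
        Tendsto b atTop (nhds (En α₁ α₂ gx gy)) := by
  obtain ⟨⟨hu2, hux, huy, hugx, hugy⟩, hua⟩ := hu
  choose φ hφ hn using fun n : ℕ => hua (1 / ((n:ℝ) + 1)) (by positivity)
  have bound : ∀ n, (∫ p in Omega, (u p - φ n p) ^ 2) +
      En α₁ α₂ (fun p => gx p - pdx (φ n) p) (fun p => gy p - pdy (φ n) p) < (1 / ((n:ℝ) + 1)) ^ 2 := by
    intro n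
    have := hn n
    unfold H1Norm at this
    rw [Real.sqrt_lt' (by positivity)] at this
    unfold En
    rw [integral_add]
    · linarith
    · have := (hugx.sub ((hφ n).wx h1 2)).integrable_sq
      simpa only [Pi.sub_apply, ← mul_sub] using this
    · have := (hugy.sub ((hφ n).wy h2 2)).integrable_sq
      simpa only [Pi.sub_apply, ← mul_sub] using this
  have tm : TendstoInMeasure (volume.restrict Omega) φ atTop u := by
    apply tendstoInMeasure_of_tendsto_eLpNorm (p := 2) (by norm_num) (fun n => ((hφ n).memLp 2).1) hu2.1
    have hle : ∀ n, eLpNorm (φ n - u) 2 (volume.restrict Omega) ≤ ENNReal.ofReal (1 / ((n:ℝ) + 1)) := by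
      intro n
      rw [(((hφ n).memLp 2).sub hu2).eLpNorm_eq_integral_rpow_norm (by norm_num) (by norm_num)]
      apply ENNReal.ofReal_le_ofReal
      have := bound n
      have h0 := En_nonneg α₁ α₂ (fun p => gx p - pdx (φ n) p) (fun p => gy p - pdy (φ n) p)
      have h3 : (∫ a in Omega, ‖(φ n - u) a‖ ^ (2:ENNReal).toReal) = ∫ p in Omega, (u p - φ n p) ^ 2 := by
        congr 1; ext p
        simp
        ring
      rw [h3]
      have h4 : (2:ENNReal).toReal⁻¹ = 1 / 2 := by simp
      rw [h4, ← Real.sqrt_eq_rpow]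
      apply Real.sqrt_le_iff.mpr
      exact ⟨by positivity, by linarith⟩
    refine tendsto_of_tendsto_of_tendsto_of_le_of_le tendsto_const_nhds ?_ (fun n => zero_le) hle
    have := ENNReal.tendsto_ofReal (tendsto_one_div_add_atTop_nhds_zero_nat (𝕜 := ℝ))
    simpa using this
  obtain ⟨ns, hns, hae⟩ := tm.exists_seq_tendsto_ae
  let b : ℕ → ℝ := fun n => (1 + 1 / ((n:ℝ) + 1)) * En α₁ α₂ gx gy + (1 + (n + 1)) * (1 / ((n:ℝ) + 1)) ^ 2
  have hb : ∀ n, En α₁ α₂ (pdx (φ n)) (pdy (φ n)) ≤ b n := by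
    intro n
    have hd : 0 ≤ ∫ p in Omega, (u p - φ n p) ^ 2 := integral_nonneg (fun p => by positivity)
    have hi1 := En_integrable hugx hugy
    have hi2 := En_integrable (α₁ := α₁) (α₂ := α₂) (gx := fun p => gx p - pdx (φ n) p) (gy := fun p => gy p - pdy (φ n) p)
      (by simp only [mul_sub]; exact hugx.sub ((hφ n).wx h1 2))
      (by simp only [mul_sub]; exact hugy.sub ((hφ n).wy h2 2))
    have key : En α₁ α₂ (pdx (φ n)) (pdy (φ n)) ≤ (1 + 1 / ((n:ℝ) + 1)) * En α₁ α₂ gx gy +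
        (1 + (n + 1)) * En α₁ α₂ (fun p => gx p - pdx (φ n) p) (fun p => gy p - pdy (φ n) p) := by
      unfold En
      rw [← integral_const_mul, ← integral_const_mul, ← integral_add (hi1.const_mul _) (hi2.const_mul _)]
      apply integral_mono (En_integrable ((hφ n).wx h1 2) ((hφ n).wy h2 2)) ((hi1.const_mul _).add (hi2.const_mul _))
      intro p
      have el : ∀ X Y d : ℝ, 0 < d → X ^ 2 ≤ (1 + 1 / d) * Y ^ 2 + (1 + d) * (Y - X) ^ 2 := by
        intro X Y d hd
        have : (1 + 1 / d) * Y ^ 2 + (1 + d) * (Y - X) ^ 2 - X ^ 2 = (Y + d * (Y - X)) ^ 2 / d := by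
          field_simp; ring
        have h' : 0 ≤ (Y + d * (Y - X)) ^ 2 / d := by positivity
        linarith
      have e1 := el (p.2 ^ α₁ * pdx (φ n) p) (p.2 ^ α₁ * gx p) (n + 1) (by positivity)
      have e2 := el (p.1 ^ α₂ * pdy (φ n) p) (p.1 ^ α₂ * gy p) (n + 1) (by positivity)
      simp only [Pi.add_apply, mul_sub]
      nlinarith
    refine key.trans ?_
    simp only [b]
    have := bound n
    gcongr
    linarith
  have hbl : Tendsto b atTop (nhds (En α₁ α₂ gx gy)) := by
    have t := tendsto_one_div_add_atTop_nhds_zero_nat (𝕜 := ℝ)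
    have : b = fun n : ℕ => (1 + 1 / ((n:ℝ) + 1)) * En α₁ α₂ gx gy + ((1 / ((n:ℝ) + 1)) ^ 2 + 1 / ((n:ℝ) + 1)) := by
      ext n; simp only [b]; field_simp
    rw [this]
    have := (((tendsto_const_nhds (x := (1:ℝ))).add t).mul_const (En α₁ α₂ gx gy)).add ((t.pow 2).add t)
    simpa using this
  exact ⟨fun i => φ (ns i), fun i => hφ _, hae, fun i => b (ns i), fun i => hb _, hbl.comp hns.tendsto_atTop⟩


lemma trunc_le {k : ℝ} (hk : 0 < k) (x : ℝ) :
    (k * Real.sin (x / k)) ^ 2 ≤ x ^ 2 ∧ (k * Real.sin (x / k)) ^ 2 ≤ k ^ 2 := by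
  constructor
  · apply sq_le_sq.mpr
    rw [abs_mul, abs_of_pos hk]
    have : |Real.sin (x / k)| ≤ |x / k| := Real.abs_sin_le_abs
    rw [abs_div, abs_of_pos hk, le_div_iff₀ hk] at this
    linarith
  · rw [mul_pow]
    nlinarith [Real.sin_sq_le_one (x / k), sq_nonneg k]

lemma trunc_tendsto (x : ℝ) :
    Tendsto (fun n : ℕ => (((n:ℝ) + 1) * Real.sin (x / ((n:ℝ) + 1)))) atTop (nhds x) := by
  have hd : HasDerivAt (fun t : ℝ => Real.sin (x * t)) x 0 := by
    have := ((hasDerivAt_id (0:ℝ)).const_mul x).sin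
    simpa using this
  have h := hd.tendsto_slope_zero_right
  have h2 : Tendsto (fun n : ℕ => 1 / ((n:ℝ) + 1)) atTop (nhdsWithin 0 (Ioi 0)) :=
    tendsto_nhdsWithin_iff.mpr ⟨tendsto_one_div_add_atTop_nhds_zero_nat, Eventually.of_forall fun n => by
      simp only [mem_Ioi]; positivity⟩
  have := h.comp h2
  simpa [Function.comp_def, div_eq_mul_inv] using this

lemma En_trunc_le {α₁ α₂ : ℝ} (h1 : 0 < α₁) (h2 : 0 < α₂) {φ : ℝ × ℝ → ℝ} (h : IsTest φ) (σ : ℝ)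
    {k : ℝ} (hk : 0 < k) :
    En α₁ α₂ (pdx (fun p => σ * (k * Real.sin (φ p / k)))) (pdy (fun p => σ * (k * Real.sin (φ p / k)))) ≤
      σ ^ 2 * En α₁ α₂ (pdx φ) (pdy φ) := by
  have hψ := h.trunc σ k
  unfold En
  rw [← integral_const_mul]
  apply integral_mono (En_integrable (hψ.wx h1 2) (hψ.wy h2 2))
    ((En_integrable (h.wx h1 2) (h.wy h2 2)).const_mul _)
  intro p
  simp only [pdx, pdy, fd_trunc h σ hk, mul_pow]
  have hc := Real.cos_sq_le_one (φ p / k)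
  have e1 : 0 ≤ σ ^ 2 * ((p.2 ^ α₁) ^ 2 * (fderiv ℝ φ p (1,0)) ^ 2) := by positivity
  have e2 : 0 ≤ σ ^ 2 * ((p.1 ^ α₂) ^ 2 * (fderiv ℝ φ p (0,1)) ^ 2) := by positivity
  have h3 := mul_le_mul_of_nonneg_left hc e1
  have h4 := mul_le_mul_of_nonneg_left hc e2
  linarith

lemma trunc_ineq {α₁ α₂ c M q : ℝ} (h1 : 0 < α₁) (h2 : 0 < α₂) (hM : 0 ≤ M) (hq : 0 < q)
    (H : TestIneq α₁ α₂ c M q) {u gx gy w wx wy : ℝ × ℝ → ℝ} (hu : MemH10 α₁ α₂ u gx gy)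
    (hw : MemH10 α₁ α₂ w wx wy) {j k : ℝ} (hj : 0 < j) (hk : 0 < k) (σ : ℝ) :
    c * (∫ p in Omega, ((j * Real.sin (u p / j)) ^ 2 + σ ^ 2 * (k * Real.sin (w p / k)) ^ 2)) ≤
      En α₁ α₂ gx gy + σ ^ 2 * En α₁ α₂ wx wy +
      M * (∫ p in Omega, ((j * Real.sin (u p / j)) ^ 2 + σ ^ 2 * (k * Real.sin (w p / k)) ^ 2) ^ q) ^ (1 / q) := by
  obtain ⟨φ, hφ, hφa, b, hb, hbl⟩ := approx h1 h2 hu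
  obtain ⟨χ, hχ, hχa, b', hb', hbl'⟩ := approx h1 h2 hw
  have ineq : ∀ n, c * (∫ p in Omega, ((j * Real.sin (φ n p / j)) ^ 2 + σ ^ 2 * (k * Real.sin (χ n p / k)) ^ 2)) ≤
      b n + σ ^ 2 * b' n +
      M * (∫ p in Omega, ((j * Real.sin (φ n p / j)) ^ 2 + σ ^ 2 * (k * Real.sin (χ n p / k)) ^ 2) ^ q) ^ (1 / q) := by
    intro n
    have := test_ineq2 h1 h2 hM hq H ((hφ n).trunc 1 j) ((hχ n).trunc σ k)
    have e1 := En_trunc_le h1 h2 (hφ n) 1 hj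
    have e2 := En_trunc_le h1 h2 (hχ n) σ hk
    have e3 := mul_le_mul_of_nonneg_left (hb' n) (sq_nonneg σ)
    have e4 := hb n
    simp only [mul_pow σ] at this
    simp only [one_mul, one_pow] at this e1
    linarith
  have conv : ∀ r : ℝ, 0 < r → Tendsto (fun n => ∫ p in Omega, ((j * Real.sin (φ n p / j)) ^ 2 + σ ^ 2 * (k * Real.sin (χ n p / k)) ^ 2) ^ r)
      atTop (nhds (∫ p in Omega, ((j * Real.sin (u p / j)) ^ 2 + σ ^ 2 * (k * Real.sin (w p / k)) ^ 2) ^ r)) := by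
    intro r hr
    apply tendsto_integral_of_dominated_convergence (fun p => (j ^ 2 + σ ^ 2 * k ^ 2) ^ r)
    · intro n
      have c1 := (hφ n).cont
      have c2 := (hχ n).cont
      have : Continuous fun p => ((j * Real.sin (φ n p / j)) ^ 2 + σ ^ 2 * (k * Real.sin (χ n p / k)) ^ 2) :=
        ((continuous_const.mul (Real.continuous_sin.comp (c1.div_const j))).pow 2).add
          (continuous_const.mul ((continuous_const.mul (Real.continuous_sin.comp (c2.div_const k))).pow 2))
      exact (this.rpow_const (fun _ => Or.inr hr.le)).aestronglyMeasurable
    · exact integrable_const _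
    · intro n
      refine ae_of_all _ fun p => ?_
      rw [Real.norm_of_nonneg (by positivity)]
      apply Real.rpow_le_rpow (by positivity) _ hr.le
      exact add_le_add (trunc_le hj _).2 (mul_le_mul_of_nonneg_left (trunc_le hk _).2 (sq_nonneg σ))
    · filter_upwards [hφa, hχa] with p hp1 hp2
      have cs := Real.continuous_sin
      apply Tendsto.rpow_const _ (Or.inr hr.le)
      refine Tendsto.add (Tendsto.pow (Tendsto.const_mul j ?_) 2)
        (Tendsto.const_mul _ (Tendsto.pow (Tendsto.const_mul k ?_) 2))
      · exact (cs.tendsto _).comp (hp1.div_const j)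
      · exact (cs.tendsto _).comp (hp2.div_const k)
  have c1 := conv 1 one_pos
  simp only [Real.rpow_one] at c1
  refine le_of_tendsto_of_tendsto' (c1.const_mul c) ?_ ineq
  exact (hbl.add (hbl'.const_mul _)).add (((conv q hq).rpow_const (Or.inr (by positivity))).const_mul M)

lemma add_rpow_le' {x y q : ℝ} (hx : 0 ≤ x) (hy : 0 ≤ y) (hq : 0 < q) :
    (x + y) ^ q ≤ 2 ^ q * (x ^ q + y ^ q) := by
  rcases le_total x y with h | h
  · calc (x + y) ^ q ≤ (2 * y) ^ q := Real.rpow_le_rpow (by positivity) (by linarith) hq.le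
      _ = 2 ^ q * y ^ q := Real.mul_rpow (by norm_num) hy
      _ ≤ _ := by gcongr; have := Real.rpow_nonneg hx q; linarith
  · calc (x + y) ^ q ≤ (2 * x) ^ q := Real.rpow_le_rpow (by positivity) (by linarith) hq.le
      _ = 2 ^ q * x ^ q := Real.mul_rpow (by norm_num) hx
      _ ≤ _ := by gcongr; have := Real.rpow_nonneg hy q; linarith

lemma tangent_ge {x y q : ℝ} (hx : 0 ≤ x) (hy : 0 ≤ y) (hq : 1 < q) :
    y ^ q - x ^ q ≤ q * y ^ (q - 1) * (y - x) := by
  rcases hy.eq_or_lt with h | h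
  · subst h
    have : 0 ≤ x ^ q := Real.rpow_nonneg hx q
    rw [Real.zero_rpow (by linarith), Real.zero_rpow (by linarith)]
    linarith
  · have := one_add_mul_self_le_rpow_one_add (s := x / y - 1) (by linarith [show 0 ≤ x / y by positivity]) hq.le
    have e : 1 + (x / y - 1) = x / y := by ring
    rw [e, Real.div_rpow hx hy, le_div_iff₀ (by positivity)] at this
    have e2 : y ^ q = y ^ (q - 1) * y := by rw [← Real.rpow_add_one h.ne']; congr 1; ring
    have e3 : (1 + q * (x / y - 1)) * y ^ q = y ^ q + q * y ^ (q-1) * (x - y) := by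
      rw [e2]; field_simp
    rw [e3] at this
    linarith

lemma tangent_le {I X q : ℝ} (hI : 0 < I) (hX : 0 ≤ X) (hq : 1 < q) :
    X ^ (1 / q) ≤ I ^ (1 / q) + I ^ ((1 - q) / q) * ((X - I) / q) := by
  have := rpow_one_add_le_one_add_mul_self (s := X / I - 1) (p := 1 / q) (by linarith [show 0 ≤ X / I by positivity]) (by positivity)
      (by rw [div_le_one (by linarith)]; exact hq.le)
  have e : 1 + (X / I - 1) = X / I := by ring
  rw [e, Real.div_rpow hX hI.le, div_le_iff₀ (by positivity)] at this
  have e2 : I ^ (1 / q) = I ^ ((1 - q) / q) * I := by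
    rw [← Real.rpow_add_one hI.ne']; congr 1; field_simp; ring
  refine this.trans (le_of_eq ?_)
  rw [e2]; field_simp


lemma memLp_abs_rpow {u : ℝ × ℝ → ℝ} {μ : Measure (ℝ × ℝ)} {r : ℝ} (hr : 0 < r)
    (h : MemLp u (ENNReal.ofReal r) μ) : Integrable (fun p => |u p| ^ r) μ := by
  have := h.integrable_norm_rpow (by simpa using hr) (by simp)
  rw [ENNReal.toReal_ofReal hr.le] at this
  simpa only [Real.norm_eq_abs] using this

lemma int_add_rpow {v b : ℝ × ℝ → ℝ} {μ : Measure (ℝ × ℝ)} [IsFiniteMeasure μ] {q B : ℝ} (hq : 0 < q)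
    (hv0 : ∀ p, 0 ≤ v p) (hvm : AEStronglyMeasurable v μ) (hv : Integrable (fun p => v p ^ q) μ)
    (hbm : AEStronglyMeasurable b μ) (hb0 : ∀ p, 0 ≤ b p) (hbB : ∀ p, b p ≤ B) :
    Integrable (fun p => (v p + b p) ^ q) μ := by
  refine Integrable.mono' ((hv.add (integrable_const (B ^ q))).const_mul (2 ^ q)) ?_ ?_
  · exact ((hvm.add hbm).aemeasurable.pow_const q).aestronglyMeasurable
  · refine ae_of_all _ fun p => ?_
    have := hv0 p
    have := hb0 p
    rw [Real.norm_of_nonneg (by positivity)]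
    refine (add_rpow_le' (hv0 p) (hb0 p) hq).trans ?_
    simp only [Pi.add_apply]
    have h3 := Real.rpow_le_rpow (hb0 p) (hbB p) hq.le
    gcongr

lemma int_add_rpow_sub {v b : ℝ × ℝ → ℝ} {μ : Measure (ℝ × ℝ)} [IsFiniteMeasure μ] {q B : ℝ} (hq : 1 < q)
    (hv0 : ∀ p, 0 ≤ v p) (hvm : AEStronglyMeasurable v μ) (hv : Integrable (fun p => v p ^ q) μ)
    (hbm : AEStronglyMeasurable b μ) (hb0 : ∀ p, 0 ≤ b p) (hbB : ∀ p, b p ≤ B) :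
    Integrable (fun p => (v p + b p) ^ (q - 1)) μ := by
  refine Integrable.mono' ((int_add_rpow (by linarith) hv0 hvm hv hbm hb0 hbB).add (integrable_const 1)) ?_ ?_
  · exact ((hvm.add hbm).aemeasurable.pow_const _).aestronglyMeasurable
  · refine ae_of_all _ fun p => ?_
    have := add_nonneg (hv0 p) (hb0 p)
    rw [Real.norm_of_nonneg (by positivity)]
    simp only [Pi.add_apply]
    rcases le_total (v p + b p) 1 with h | h
    · have h1 := Real.rpow_le_one this h (by linarith : 0 ≤ q - 1)
      have h2 := Real.rpow_nonneg this q
      linarith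
    · have h1 := Real.rpow_le_rpow_of_exponent_le h (by linarith : q - 1 ≤ q)
      linarith

lemma bound_k {α₁ α₂ c M q : ℝ} (h1 : 0 < α₁) (h2 : 0 < α₂) (hM : 0 < M) (hq : 1 < q)
    (H : TestIneq α₁ α₂ c M q) {u gx gy w wx wy : ℝ × ℝ → ℝ} (hu : MemH10 α₁ α₂ u gx gy)
    (hu2 : Integrable (fun p => |u p| ^ (2 * q)) (volume.restrict Omega))
    (hI : 0 < ∫ p in Omega, |u p| ^ (2 * q))
    (hJ : c * (∫ p in Omega, u p ^ 2) = En α₁ α₂ gx gy + M * (∫ p in Omega, |u p| ^ (2 * q)) ^ (1 / q))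
    (hw : MemH10 α₁ α₂ w wx wy) {k : ℝ} (hk : 0 < k) :
    c * (∫ p in Omega, (k * Real.sin (w p / k)) ^ 2) ≤ En α₁ α₂ wx wy +
      ∫ p in Omega, (M * (∫ q' in Omega, |u q'| ^ (2 * q)) ^ ((1 - q) / q) * |u p| ^ (2 * (q - 1))) *
        (k * Real.sin (w p / k)) ^ 2 := by
  set μ := volume.restrict Omega with hμ
  have hq0 : 0 < q := by linarith
  simp only [abs_rpow_two_mul] at hu2 hI hJ ⊢
  set I := ∫ p, (u p ^ 2) ^ q ∂μ with hIdef
  set b : ℝ × ℝ → ℝ := fun p => (k * Real.sin (w p / k)) ^ 2 with hb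
  have hum : AEStronglyMeasurable u μ := hu.1.memL2.1
  have hwm : AEStronglyMeasurable w μ := hw.1.memL2.1
  have hvm : AEStronglyMeasurable (fun p => u p ^ 2) μ := hum.pow 2
  have hsm : ∀ (f : ℝ × ℝ → ℝ) (j : ℝ), AEStronglyMeasurable f μ → AEStronglyMeasurable (fun p => (j * Real.sin (f p / j)) ^ 2) μ := by
    intro f j hf
    have hc : Continuous (fun t : ℝ => (j * Real.sin (t / j)) ^ 2) := by fun_prop
    exact hc.comp_aestronglyMeasurable hf
  have hbm : AEStronglyMeasurable b μ := hsm w k hwm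
  have hb0 : ∀ p, 0 ≤ b p := fun p => by simp only [hb]; positivity
  have hbB : ∀ p, b p ≤ k ^ 2 := fun p => (trunc_le hk _).2
  have hbi : Integrable b μ := Integrable.mono' (integrable_const (k^2)) hbm
    (ae_of_all _ fun p => by rw [Real.norm_of_nonneg (hb0 p)]; exact hbB p)
  have hu2' : Integrable (fun p => u p ^ 2) μ := hu.1.memL2.integrable_sq
  have hsb : ∀ s : ℝ, 0 ≤ s → Integrable (fun p => (u p ^ 2 + s * b p) ^ q) μ := fun s hs =>
    int_add_rpow hq0 (fun p => sq_nonneg (u p)) hvm hu2 (hbm.const_mul s) (fun p => mul_nonneg hs (hb0 p))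
      (fun p => mul_le_mul_of_nonneg_left (hbB p) hs)
  have hsb1 : ∀ s : ℝ, 0 ≤ s → Integrable (fun p => (u p ^ 2 + s * b p) ^ (q - 1)) μ := fun s hs =>
    int_add_rpow_sub hq (fun p => sq_nonneg (u p)) hvm hu2 (hbm.const_mul s) (fun p => mul_nonneg hs (hb0 p))
      (fun p => mul_le_mul_of_nonneg_left (hbB p) hs)
  have hsb2 : ∀ s : ℝ, 0 ≤ s → Integrable (fun p => (u p ^ 2 + s * b p) ^ (q - 1) * b p) μ := fun s hs =>
    (hsb1 s hs).mul_bdd hbm (ae_of_all _ fun p => by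
      rw [Real.norm_of_nonneg (hb0 p)]; exact hbB p)
  -- step 1: j to infinity
  have step1 : ∀ s : ℝ, 0 < s → c * (∫ p, (u p ^ 2 + s * b p) ∂μ) ≤
      En α₁ α₂ gx gy + s * En α₁ α₂ wx wy + M * (∫ p, (u p ^ 2 + s * b p) ^ q ∂μ) ^ (1 / q) := by
    intro s hs
    have ineq : ∀ n : ℕ, c * (∫ p, ((((n:ℝ) + 1) * Real.sin (u p / ((n:ℝ) + 1))) ^ 2 + s * b p) ∂μ) ≤
      En α₁ α₂ gx gy + s * En α₁ α₂ wx wy + M * (∫ p, (u p ^ 2 + s * b p) ^ q ∂μ) ^ (1 / q) := by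
      intro n
      have hn : (0:ℝ) < (n:ℝ) + 1 := by positivity
      have := trunc_ineq h1 h2 hM.le hq0 H hu hw hn hk (Real.sqrt s)
      rw [Real.sq_sqrt hs.le] at this
      refine this.trans (add_le_add le_rfl (mul_le_mul_of_nonneg_left (Real.rpow_le_rpow ?_ ?_ (by positivity)) hM.le))
      · exact integral_nonneg fun p => by have := hs.le; positivity
      · apply integral_mono_of_nonneg _ (hsb s hs.le)
        · refine ae_of_all _ fun p => Real.rpow_le_rpow ?_ ?_ hq0.le
          · have := hb0 p; positivity
          · exact add_le_add (trunc_le hn _).1 le_rfl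
        · exact ae_of_all _ fun p => by have := hs.le; positivity
    refine le_of_tendsto' (x := atTop) (Tendsto.const_mul c ?_) ineq
    apply tendsto_integral_of_dominated_convergence (fun p => u p ^ 2 + s * b p)
    · intro n
      exact (hsm u _ hum).add (hbm.const_mul s)
    · exact hu2'.add (hbi.const_mul s)
    · intro n
      refine ae_of_all _ fun p => ?_
      have := hb0 p
      rw [Real.norm_of_nonneg (by positivity)]
      exact add_le_add (trunc_le (by positivity) _).1 le_rfl
    · exact ae_of_all _ fun p => ((trunc_tendsto (u p)).pow 2).add tendsto_const_nhds
  -- step 2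
  have step2 : ∀ s : ℝ, 0 < s → c * (∫ p, b p ∂μ) ≤ En α₁ α₂ wx wy +
      M * (I ^ ((1 - q) / q) * ∫ p, (u p ^ 2 + s * b p) ^ (q - 1) * b p ∂μ) := by
    intro s hs
    have e1 := step1 s hs
    have hX : 0 ≤ ∫ p, (u p ^ 2 + s * b p) ^ q ∂μ := integral_nonneg fun p => by
      have := hb0 p; positivity
    have e2 := tangent_le hI hX hq
    have e3 : (∫ p, (u p ^ 2 + s * b p) ^ q ∂μ) - I ≤ q * s * ∫ p, (u p ^ 2 + s * b p) ^ (q - 1) * b p ∂μ := by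
      rw [hIdef, ← integral_sub (hsb s hs.le) hu2, ← integral_const_mul]
      apply integral_mono ((hsb s hs.le).sub hu2) ((hsb2 s hs.le).const_mul _)
      intro p
      have := hb0 p
      have := tangent_ge (sq_nonneg (u p)) (by positivity : 0 ≤ u p ^ 2 + s * b p) hq
      simp only [Pi.sub_apply]
      linarith
    have e4 : ((∫ p, (u p ^ 2 + s * b p) ^ q ∂μ) - I) / q ≤ s * ∫ p, (u p ^ 2 + s * b p) ^ (q - 1) * b p ∂μ := by
      rw [div_le_iff₀ hq0]; linarith
    have e5 := mul_le_mul_of_nonneg_left e4 (Real.rpow_nonneg hI.le ((1 - q) / q))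
    have e6 := mul_le_mul_of_nonneg_left (e2.trans (add_le_add le_rfl e5)) hM.le
    rw [integral_add hu2' (hbi.const_mul s), integral_const_mul] at e1
    have e7 : s * (c * (∫ p, b p ∂μ)) ≤ s * (En α₁ α₂ wx wy +
      M * (I ^ ((1 - q) / q) * ∫ p, (u p ^ 2 + s * b p) ^ (q - 1) * b p ∂μ)) := by linarith
    exact le_of_mul_le_mul_left e7 hs
  have step3 : c * (∫ p, b p ∂μ) ≤ En α₁ α₂ wx wy +
      M * (I ^ ((1 - q) / q) * ∫ p, (u p ^ 2) ^ (q - 1) * b p ∂μ) := by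
    refine ge_of_tendsto' (x := atTop) (Tendsto.const_add _ (Tendsto.const_mul _ (Tendsto.const_mul _ ?_))) (fun n : ℕ => step2 (1 / ((n:ℝ) + 1)) (by positivity))
    apply tendsto_integral_of_dominated_convergence (fun p => (u p ^ 2 + 1 * b p) ^ (q - 1) * b p)
    · exact fun n => (hsb2 _ (by positivity)).1
    · exact hsb2 1 zero_le_one
    · intro n
      refine ae_of_all _ fun p => ?_
      have := hb0 p
      rw [Real.norm_of_nonneg (by positivity)]
      have hn : 1 / ((n:ℝ) + 1) ≤ 1 := by
        rw [div_le_one (by positivity)]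
        linarith [(Nat.cast_nonneg n : (0:ℝ) ≤ n)]
      have hq1 : 0 ≤ q - 1 := by linarith
      gcongr
    · refine ae_of_all _ fun p => ?_
      apply Tendsto.mul_const
      apply Tendsto.rpow_const _ (Or.inr (by linarith))
      have := (tendsto_one_div_add_atTop_nhds_zero_nat (𝕜 := ℝ)).mul_const (b p)
      simpa using this.const_add (u p ^ 2)
  refine step3.trans (le_of_eq ?_)
  rw [← mul_assoc, ← integral_const_mul]
  congr 2
  ext p
  ring

lemma bound_all {α₁ α₂ c M q : ℝ} (h1 : 0 < α₁) (h2 : 0 < α₂) (hM : 0 < M) (hq : 1 < q)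
    (H : TestIneq α₁ α₂ c M q) {u gx gy w wx wy : ℝ × ℝ → ℝ} (hu : MemH10 α₁ α₂ u gx gy)
    (hu2 : Integrable (fun p => |u p| ^ (2 * q)) (volume.restrict Omega))
    (hI : 0 < ∫ p in Omega, |u p| ^ (2 * q))
    (hJ : c * (∫ p in Omega, u p ^ 2) = En α₁ α₂ gx gy + M * (∫ p in Omega, |u p| ^ (2 * q)) ^ (1 / q))
    (hw : MemH10 α₁ α₂ w wx wy) {V : ℝ × ℝ → ℝ}
    (hV : V = fun p => (M * (∫ q' in Omega, |u q'| ^ (2 * q)) ^ ((1 - q) / q) * |u p| ^ (2 * (q - 1))))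
    (hVw : Integrable (fun p => V p * w p ^ 2) (volume.restrict Omega)) :
    c * (∫ p in Omega, w p ^ 2) ≤ En α₁ α₂ wx wy + ∫ p in Omega, V p * w p ^ 2 := by
  have key := fun n : ℕ => bound_k h1 h2 hM hq H hu hu2 hI hJ hw (k := (n:ℝ) + 1) (by positivity)
  have hV0 : ∀ p, 0 ≤ V p := by intro p; rw [hV]; positivity
  have key' : ∀ n : ℕ, c * (∫ p in Omega, (((n:ℝ) + 1) * Real.sin (w p / ((n:ℝ) + 1))) ^ 2) ≤
      En α₁ α₂ wx wy + ∫ p in Omega, V p * w p ^ 2 := by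
    intro n
    refine (key n).trans (add_le_add le_rfl ?_)
    apply integral_mono_of_nonneg _ hVw
    · refine ae_of_all _ fun p => ?_
      have : V p = M * (∫ q' in Omega, |u q'| ^ (2 * q)) ^ ((1 - q) / q) * |u p| ^ (2 * (q - 1)) := by rw [hV]
      simp only [← this]
      exact mul_le_mul_of_nonneg_left (trunc_le (by positivity) _).1 (hV0 p)
    · exact ae_of_all _ fun p => by positivity
  refine le_of_tendsto' (x := atTop) (Tendsto.const_mul c ?_) key'
  have hwm : AEStronglyMeasurable w (volume.restrict Omega) := hw.1.memL2.1
  apply tendsto_integral_of_dominated_convergence (fun p => w p ^ 2)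
  · intro n
    have hc : Continuous (fun t : ℝ => (((n:ℝ) + 1) * Real.sin (t / ((n:ℝ) + 1))) ^ 2) := by fun_prop
    exact hc.comp_aestronglyMeasurable hwm
  · exact hw.1.memL2.integrable_sq
  · intro n
    refine ae_of_all _ fun p => ?_
    rw [Real.norm_of_nonneg (by positivity)]
    exact (trunc_le (by positivity) _).1
  · exact ae_of_all _ fun p => ((trunc_tendsto (w p)).pow 2)


lemma young_eq {a b p q : ℝ} (ha : 0 ≤ a) (hb : 0 ≤ b) (hpq : p.HolderConjugate q)
    (h : a * b = a ^ p / p + b ^ q / q) : a = b ^ (q - 1) := by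
  have hp := hpq.pos
  have hq := hpq.symm.pos
  have hp1 := hpq.lt
  have := (Real.geom_mean_eq_arith_mean2_weighted_iff_of_pos (w₁ := p⁻¹) (w₂ := q⁻¹)
    (inv_pos.mpr hp) (inv_pos.mpr hq) (Real.rpow_nonneg ha p) (Real.rpow_nonneg hb q) hpq.inv_add_inv_eq_one).mp
    (by rw [Real.rpow_rpow_inv ha hp.ne', Real.rpow_rpow_inv hb hq.ne', h]; ring)
  have e : a = (a ^ p) ^ p⁻¹ := (Real.rpow_rpow_inv ha hp.ne').symm
  rw [e, this, ← Real.rpow_mul hb]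
  congr 1
  have := hpq.inv_add_inv_eq_one
  field_simp at this ⊢
  linarith

lemma VS_int {p q : ℝ} (hpq : p.HolderConjugate q) {μ : Measure (ℝ × ℝ)} {V w : ℝ × ℝ → ℝ}
    (hV : MemLp V (ENNReal.ofReal p) μ) (hw : MemLp w (ENNReal.ofReal (2 * q)) μ) :
    Integrable (fun x => V x * w x ^ 2) μ := by
  have hp := hpq.pos
  have hq := hpq.symm.pos
  have i1 := memLp_abs_rpow hp hV
  have i2 := memLp_abs_rpow (by positivity) hw
  refine Integrable.mono' ((i1.div_const p).add (i2.div_const q)) (hV.1.mul (hw.1.pow 2)) ?_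
  refine ae_of_all _ fun x => ?_
  simp only [Pi.add_apply]
  rw [norm_mul, Real.norm_eq_abs, Real.norm_of_nonneg (sq_nonneg _), abs_rpow_two_mul]
  exact Real.young_inequality_of_nonneg (abs_nonneg _) (sq_nonneg _) hpq

lemma Sp_int {p M : ℝ} (hp : 0 < p) (hM : 0 < M) {V : ℝ × ℝ → ℝ} (hV : MemSp p M V) :
    ∫ x in Omega, |V x| ^ p ≤ M ^ p := by
  have h := hV.2.2
  rw [hV.1.eLpNorm_eq_integral_rpow_norm (by simpa using hp) (by simp), ENNReal.toReal_ofReal hp.le,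
    ENNReal.ofReal_le_ofReal_iff hM.le] at h
  simp only [Real.norm_eq_abs] at h
  have h0 : 0 ≤ ∫ x in Omega, |V x| ^ p := integral_nonneg fun x => by positivity
  have := Real.rpow_le_rpow (by positivity) h hp.le
  rwa [Real.rpow_inv_rpow h0 hp.ne'] at this

lemma holder_eq {p q M : ℝ} (hpq : p.HolderConjugate q) (hM : 0 < M) {V u : ℝ × ℝ → ℝ}
    (hV : MemSp p M V) (hu : MemLp u (ENNReal.ofReal (2 * q)) (volume.restrict Omega))
    (hI : 0 < ∫ x in Omega, |u x| ^ (2 * q)) :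
    (∫ x in Omega, V x * u x ^ 2) ≤ M * (∫ x in Omega, |u x| ^ (2 * q)) ^ (1 / q) ∧
    ((∫ x in Omega, V x * u x ^ 2) = M * (∫ x in Omega, |u x| ^ (2 * q)) ^ (1 / q) →
      ∀ᵐ x ∂(volume.restrict Omega), V x =
        M * (∫ q' in Omega, |u q'| ^ (2 * q)) ^ ((1 - q) / q) * |u x| ^ (2 * (q - 1))) := by
  have hp := hpq.pos
  have hq := hpq.symm.pos
  have hSp := Sp_int hp hM hV
  have i1 := memLp_abs_rpow hp hV.1
  have i2 := memLp_abs_rpow (by positivity) hu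
  have i3 := VS_int hpq hV.1 hu
  set I := ∫ x in Omega, |u x| ^ (2 * q) with hIdef
  set N := I ^ (1 / q) with hN
  have hN0 : 0 < N := by positivity
  have hNq : N ^ q = I := by
    rw [hN, ← Real.rpow_mul hI.le]; field_simp; simp
  have hNq1 : N ^ (q - 1) * I ^ ((1 - q) / q) = 1 := by
    rw [hN, ← Real.rpow_mul hI.le, ← Real.rpow_add hI]
    have : 1 / q * (q - 1) + (1 - q) / q = 0 := by field_simp; ring
    rw [this, Real.rpow_zero]
  set D : ℝ × ℝ → ℝ := fun x => (|V x| ^ p / M ^ p / p + |u x| ^ (2 * q) / I / q) - V x * u x ^ 2 / (M * N) with hD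
  have hDy : ∀ x, 0 ≤ V x → |V x| ^ p / M ^ p / p + |u x| ^ (2 * q) / I / q =
      (V x / M) ^ p / p + (u x ^ 2 / N) ^ q / q := by
    intro x hx
    rw [Real.div_rpow hx hM.le, Real.div_rpow (sq_nonneg _) hN0.le, hNq, abs_rpow_two_mul, abs_of_nonneg hx]
  have hDm : ∀ x, V x * u x ^ 2 / (M * N) = (V x / M) * (u x ^ 2 / N) := by
    intro x; field_simp
  have hD0 : 0 ≤ᵐ[volume.restrict Omega] D := by
    filter_upwards [hV.2.1] with x hx
    simp only [hD, Pi.zero_apply, sub_nonneg]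
    rw [hDy x hx, hDm]
    exact Real.young_inequality_of_nonneg (by positivity) (by positivity) hpq
  have i4 : Integrable (fun x => |V x| ^ p / M ^ p / p + |u x| ^ (2 * q) / I / q) (volume.restrict Omega) :=
    ((i1.div_const _).div_const _).add ((i2.div_const _).div_const _)
  have iD : Integrable D (volume.restrict Omega) := i4.sub (i3.div_const _)
  have hint : ∫ x in Omega, D x ≤ 1 - (∫ x in Omega, V x * u x ^ 2) / (M * N) := by
    simp only [hD]
    rw [integral_sub i4 (i3.div_const _), integral_add ((i1.div_const _).div_const _) ((i2.div_const _).div_const _)]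
    simp only [integral_div]
    rw [← hIdef, div_self hI.ne']
    have e1 : (∫ x in Omega, |V x| ^ p) / M ^ p / p ≤ 1 / p := by
      apply div_le_div_of_nonneg_right _ hp.le
      rw [div_le_one (by positivity)]
      exact hSp
    have e2 : 1 / p + 1 / q = 1 := by simpa using hpq.inv_add_inv_eq_one
    linarith
  have hDn : 0 ≤ ∫ x in Omega, D x := integral_nonneg_of_ae hD0
  constructor
  · have : (∫ x in Omega, V x * u x ^ 2) / (M * N) ≤ 1 := by linarith
    rwa [div_le_one (by positivity)] at this
  · intro heq
    rw [heq, div_self (by positivity)] at hint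
    have hz : ∫ x in Omega, D x = 0 := by linarith
    rw [integral_eq_zero_iff_of_nonneg_ae hD0 iD] at hz
    filter_upwards [hz, hV.2.1] with x hx hVx
    simp only [hD, Pi.zero_apply] at hx
    rw [hDy x hVx, hDm] at hx
    have := young_eq (a := V x / M) (b := u x ^ 2 / N) (by positivity) (by positivity) hpq (by linarith)
    rw [Real.div_rpow (sq_nonneg _) hN0.le, ← abs_rpow_two_mul] at this
    have e : I ^ ((1 - q) / q) = 1 / N ^ (q - 1) := by
      rw [eq_div_iff (by positivity)]; linarith
    rw [e]
    field_simp at this ⊢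
    linarith

lemma V0_facts {p q M : ℝ} (hpq : p.HolderConjugate q) (hM : 0 < M) {u V₀ : ℝ × ℝ → ℝ}
    (hu : MemLp u (ENNReal.ofReal (2 * q)) (volume.restrict Omega))
    (hI : 0 < ∫ x in Omega, |u x| ^ (2 * q))
    (hV : V₀ = fun x => M * (∫ q' in Omega, |u q'| ^ (2 * q)) ^ ((1 - q) / q) * |u x| ^ (2 * (q - 1))) :
    MemLp V₀ (ENNReal.ofReal p) (volume.restrict Omega) ∧ (∀ x, 0 ≤ V₀ x) ∧
    eLpNorm V₀ (ENNReal.ofReal p) (volume.restrict Omega) = ENNReal.ofReal M ∧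
    (∫ x in Omega, V₀ x * u x ^ 2) = M * (∫ x in Omega, |u x| ^ (2 * q)) ^ (1 / q) := by
  have hp := hpq.pos
  have hq := hpq.symm.pos
  have hq1 := hpq.symm.lt
  have hpq' : (q - 1) * p = q := by
    have := hpq.inv_add_inv_eq_one
    field_simp at this
    linarith
  have i2 := memLp_abs_rpow (by positivity) hu
  set I := ∫ x in Omega, |u x| ^ (2 * q) with hIdef
  have h0 : ∀ x, 0 ≤ V₀ x := by intro x; rw [hV]; positivity
  have hpow : ∀ x, ‖V₀ x‖ ^ p = M ^ p * I⁻¹ * |u x| ^ (2 * q) := by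
    intro x
    rw [Real.norm_of_nonneg (h0 x), hV]
    simp only
    rw [Real.mul_rpow (by positivity) (by positivity), Real.mul_rpow (by positivity) (by positivity),
      ← Real.rpow_mul hI.le, ← Real.rpow_mul (abs_nonneg _)]
    congr 2
    · rw [← Real.rpow_neg_one]
      congr 1
      field_simp
      linarith
    · linarith
  have hm : AEStronglyMeasurable V₀ (volume.restrict Omega) := by
    rw [hV]
    exact ((hu.1.norm.aemeasurable.pow_const _).const_mul _).aestronglyMeasurable
  have hL : MemLp V₀ (ENNReal.ofReal p) (volume.restrict Omega) := by
    rw [← integrable_norm_rpow_iff hm (by simpa using hp) (by simp), ENNReal.toReal_ofReal hp.le]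
    simp only [hpow]
    exact i2.const_mul _
  refine ⟨hL, h0, ?_, ?_⟩
  · rw [hL.eLpNorm_eq_integral_rpow_norm (by simpa using hp) (by simp), ENNReal.toReal_ofReal hp.le]
    simp only [hpow]
    rw [integral_const_mul, ← hIdef, mul_assoc, inv_mul_cancel₀ hI.ne', mul_one, Real.rpow_rpow_inv hM.le hp.ne']
  · have : ∀ x, V₀ x * u x ^ 2 = M * I ^ ((1 - q) / q) * |u x| ^ (2 * q) := by
      intro x
      rw [hV]
      simp only
      rw [mul_assoc, abs_rpow_two_mul, abs_rpow_two_mul]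
      congr 1
      by_cases hx : u x ^ 2 = 0
      · rw [hx, Real.zero_rpow hq.ne', mul_zero]
      · rw [← Real.rpow_add_one hx]; congr 1; ring
    simp only [this]
    rw [integral_const_mul, ← hIdef, mul_assoc, ← Real.rpow_add_one hI.ne']
    congr 2
    field_simp; ring

lemma a1Form_self (α₁ α₂ : ℝ) (u gx gy : ℝ × ℝ → ℝ) :
    a1Form α₁ α₂ u gx gy u gx gy = En α₁ α₂ gx gy := by
  unfold a1Form En
  congr 1; ext p; ring

lemma aForm_self {α₁ α₂ : ℝ} {V u gx gy : ℝ × ℝ → ℝ} (h : MemH0 α₁ α₂ V u gx gy) :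
    aForm α₁ α₂ V u gx gy u gx gy = En α₁ α₂ gx gy + ∫ p in Omega, V p * u p ^ 2 := by
  unfold aForm En
  rw [← integral_add (En_integrable h.1.1.wgx h.1.1.wgy) h.2]
  congr 1; ext p; ring

lemma normalized {α₁ α₂ : ℝ} (h1 : 0 < α₁) (h2 : 0 < α₂) {V u gx gy : ℝ × ℝ → ℝ} (h : MemH0 α₁ α₂ V u gx gy)
    (hm : 0 < ∫ p in Omega, u p ^ 2) :
    (aForm α₁ α₂ V u gx gy u gx gy) / (∫ p in Omega, u p ^ 2) ∈
    { r | ∃ u gx gy : ℝ × ℝ → ℝ, MemH0 α₁ α₂ V u gx gy ∧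
    (∫ p in Omega, (u p) ^ 2) = 1 ∧ r = aForm α₁ α₂ V u gx gy u gx gy } := by
  set m := ∫ p in Omega, u p ^ 2 with hmdef
  set a := (Real.sqrt m)⁻¹ with ha
  have ha2 : a ^ 2 = 1 / m := by rw [ha, inv_pow, Real.sq_sqrt hm.le]; simp
  refine ⟨_, _, _, ⟨h.1.lin h1 h2 h.1 a 0, ?_⟩, ?_, ?_⟩
  · have := h.2.const_mul (a^2)
    refine this.congr (ae_of_all _ fun p => ?_)
    simp only; ring
  · have : (fun p => (a * u p + 0 * u p) ^ 2) = fun p => a ^ 2 * u p ^ 2 := by ext p; ring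
    rw [this, integral_const_mul, ← hmdef, ha2]
    field_simp
  · have : aForm α₁ α₂ V u gx gy u gx gy / m = a ^ 2 * aForm α₁ α₂ V u gx gy u gx gy := by rw [ha2]; ring
    rw [this]
    unfold aForm
    rw [← integral_const_mul]
    congr 1; ext p; ring

lemma lam1_le {α₁ α₂ : ℝ} (h1 : 0 < α₁) (h2 : 0 < α₂) {V u gx gy : ℝ × ℝ → ℝ} (h : MemH0 α₁ α₂ V u gx gy)
    (hV : ∀ᵐ p ∂(volume.restrict Omega), 0 ≤ V p) (hm : 0 < ∫ p in Omega, u p ^ 2) :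
    lam1 α₁ α₂ V * (∫ p in Omega, u p ^ 2) ≤ En α₁ α₂ gx gy + ∫ p in Omega, V p * u p ^ 2 := by
  rw [← aForm_self h, ← le_div_iff₀ hm]
  refine csInf_le ⟨0, ?_⟩ (normalized h1 h2 h hm)
  rintro r ⟨v, vx, vy, hv, -, rfl⟩
  unfold aForm
  apply integral_nonneg_of_ae
  filter_upwards [hV] with p hp
  simp only [Pi.zero_apply, mul_assoc (V p), ← sq]
  positivity

lemma le_lam1 {α₁ α₂ c : ℝ} (h1 : 0 < α₁) (h2 : 0 < α₂) {V u gx gy : ℝ × ℝ → ℝ} (h : MemH0 α₁ α₂ V u gx gy)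
    (hm : 0 < ∫ p in Omega, u p ^ 2)
    (hc : ∀ w wx wy, MemH0 α₁ α₂ V w wx wy → c * (∫ p in Omega, w p ^ 2) ≤ En α₁ α₂ wx wy + ∫ p in Omega, V p * w p ^ 2) :
    c ≤ lam1 α₁ α₂ V := by
  refine le_csInf ⟨_, normalized h1 h2 h hm⟩ ?_
  rintro r ⟨v, vx, vy, hv, hv1, rfl⟩
  rw [aForm_self hv]
  have := hc _ _ _ hv
  rwa [hv1, mul_one] at this

lemma lin_zero {B C : ℝ} (h : ∀ t : ℝ, 0 ≤ 2 * t * B + t ^ 2 * C) : B = 0 := by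
  by_contra hB
  have hB2 : 0 < B ^ 2 := by positivity
  have hD : 0 < |C| + 1 := by positivity
  have := h (-B / (|C| + 1))
  have e : 2 * (-B / (|C| + 1)) * B + (-B / (|C| + 1)) ^ 2 * C = B ^ 2 * (C - 2 * (|C| + 1)) / (|C| + 1) ^ 2 := by
    field_simp; ring
  rw [e] at this
  have h3 : B ^ 2 * (C - 2 * (|C| + 1)) < 0 := by
    apply mul_neg_of_pos_of_neg hB2
    have := le_abs_self C
    have := abs_nonneg C
    linarith
  have := div_neg_of_neg_of_pos h3 (by positivity : 0 < (|C| + 1) ^ 2)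
  linarith

lemma euler_lagrange {α₁ α₂ c : ℝ} (h1 : 0 < α₁) (h2 : 0 < α₂) {V u gx gy w wx wy : ℝ × ℝ → ℝ}
    (hVm : AEStronglyMeasurable V (volume.restrict Omega)) (hV0 : ∀ p, 0 ≤ V p)
    (hu : MemH0 α₁ α₂ V u gx gy) (hw : MemH0 α₁ α₂ V w wx wy)
    (hu0 : c * (∫ p in Omega, u p ^ 2) = En α₁ α₂ gx gy + ∫ p in Omega, V p * u p ^ 2)
    (hc : ∀ w wx wy, MemH0 α₁ α₂ V w wx wy → c * (∫ p in Omega, w p ^ 2) ≤ En α₁ α₂ wx wy + ∫ p in Omega, V p * w p ^ 2) :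
    a1Form α₁ α₂ u gx gy w wx wy + (∫ p in Omega, V p * u p * w p) = c * ∫ p in Omega, u p * w p := by
  have hum := hu.1.1.memL2
  have hwm := hw.1.1.memL2
  have iuw : Integrable (fun p => u p * w p) (volume.restrict Omega) := hum.integrable_mul hwm
  have iV : Integrable (fun p => V p * u p * w p) (volume.restrict Omega) := by
    refine Integrable.mono' (hu.2.add hw.2) ((hVm.mul hum.1).mul hwm.1) (ae_of_all _ fun p => ?_)
    simp only [Pi.add_apply]
    rw [mul_assoc, norm_mul, Real.norm_of_nonneg (hV0 p), ← mul_add, Real.norm_eq_abs]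
    apply mul_le_mul_of_nonneg_left _ (hV0 p)
    rw [abs_le]
    constructor <;> nlinarith [sq_nonneg (u p + w p), sq_nonneg (u p - w p), sq_nonneg (u p), sq_nonneg (w p)]
  have ia : Integrable (fun p => (p.2 ^ α₁ * gx p) * (p.2 ^ α₁ * wx p) +
      (p.1 ^ α₂ * gy p) * (p.1 ^ α₂ * wy p)) (volume.restrict Omega) :=
    (hu.1.1.wgx.integrable_mul hw.1.1.wgx).add (hu.1.1.wgy.integrable_mul hw.1.1.wgy)
  have ieu := En_integrable hu.1.1.wgx hu.1.1.wgy
  have iew := En_integrable hw.1.1.wgx hw.1.1.wgy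
  have expand : ∀ {F G K L : ℝ × ℝ → ℝ} (t : ℝ), Integrable F (volume.restrict Omega) →
      Integrable G (volume.restrict Omega) → Integrable K (volume.restrict Omega) →
      (∀ p, L p = F p + (2 * t) * G p + t ^ 2 * K p) →
      ∫ p in Omega, L p = (∫ p in Omega, F p) + (2 * t) * (∫ p in Omega, G p) + t ^ 2 * (∫ p in Omega, K p) := by
    intro F G K L t hF hG hK hL
    have hFG : Integrable (fun p => F p + (2 * t) * G p) (volume.restrict Omega) := hF.add (hG.const_mul _)
    simp only [hL]
    rw [integral_add hFG (hK.const_mul _), integral_add hF (hG.const_mul _),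
      integral_const_mul, integral_const_mul]
  have key : ∀ t : ℝ, 0 ≤ 2 * t * (a1Form α₁ α₂ u gx gy w wx wy + (∫ p in Omega, V p * u p * w p) - c * ∫ p in Omega, u p * w p) +
      t ^ 2 * (En α₁ α₂ wx wy + (∫ p in Omega, V p * w p ^ 2) - c * ∫ p in Omega, w p ^ 2) := by
    intro t
    have hm : MemH0 α₁ α₂ V (fun p => 1 * u p + t * w p) (fun p => 1 * gx p + t * wx p) (fun p => 1 * gy p + t * wy p) := by
      refine ⟨hu.1.lin h1 h2 hw.1 1 t, ?_⟩
      have := (hu.2.add (iV.const_mul (2 * t))).add (hw.2.const_mul (t^2))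
      refine this.congr (ae_of_all _ fun p => ?_)
      simp only [Pi.add_apply]; ring
    have hh := hc _ _ _ hm
    have x1 := expand (L := fun p => (1 * u p + t * w p) ^ 2) t hum.integrable_sq iuw hwm.integrable_sq (fun p => by ring)
    have x2 := expand (L := fun p => V p * (1 * u p + t * w p) ^ 2) t hu.2 iV hw.2 (fun p => by ring)
    have x3 := expand (L := fun p => (p.2 ^ α₁ * (1 * gx p + t * wx p)) ^ 2 + (p.1 ^ α₂ * (1 * gy p + t * wy p)) ^ 2) t ieu ia iew (fun p => by ring)
    rw [x1, x2] at hh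
    unfold En at hh hu0 ⊢
    unfold a1Form
    rw [x3] at hh
    linarith
  have := lin_zero key
  linarith


/-- Optimal potential for the first eigenvalue: with
`V₀ = M ‖u₀²‖_{L^q}^{1−q} |u₀|^{2(q−1)}` built from a nonnegative minimizer `u₀` of
`J`, one has `V₀ ∈ S_p` with `‖V₀‖_{L^p} = M`; `u₀` is a first eigenfunction for
`V₀`; `λ₁(V₀) = J(u₀) = sup { λ₁(V) : V ∈ S_p }`; and `V₀` is the unique maximizer
(up to a.e. equality). -/
theorem optimal_potential_first_eigenvalue (α₁ α₂ ppow qe M : ℝ)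
    (hα₁ : α₁ ∈ Ioo (0:ℝ) (1/2)) (hα₂ : α₂ ∈ Ioo (0:ℝ) (1/2))
    (hp : 1 < ppow) (hq : qe = ppow / (ppow - 1)) (hM : 0 < M)
    (u₀ g₀x g₀y : ℝ × ℝ → ℝ) (hmemU : MemU α₁ α₂ qe u₀ g₀x g₀y)
    (hpos : ∀ᵐ p ∂(volume.restrict Omega), 0 ≤ u₀ p)
    (hmin : ∀ u gx gy : ℝ × ℝ → ℝ, MemU α₁ α₂ qe u gx gy →
      Jfun α₁ α₂ M qe u₀ g₀x g₀y ≤ Jfun α₁ α₂ M qe u gx gy) :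
    ∀ V₀ : ℝ × ℝ → ℝ,
      (V₀ = fun p : ℝ × ℝ =>
        M * (∫ q in Omega, |u₀ q| ^ (2 * qe)) ^ ((1 - qe) / qe) *
          |u₀ p| ^ (2 * (qe - 1))) →
      MemSp ppow M V₀ ∧
      eLpNorm V₀ (ENNReal.ofReal ppow) (volume.restrict Omega) = ENNReal.ofReal M ∧
      (∀ w wx wy : ℝ × ℝ → ℝ, MemH10 α₁ α₂ w wx wy →
        MemLp w (ENNReal.ofReal (2 * qe)) (volume.restrict Omega) →
        a1Form α₁ α₂ u₀ g₀x g₀y w wx wy + (∫ p in Omega, V₀ p * u₀ p * w p) =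
          lam1 α₁ α₂ V₀ * ∫ p in Omega, u₀ p * w p) ∧
      lam1 α₁ α₂ V₀ = Jfun α₁ α₂ M qe u₀ g₀x g₀y ∧
      lam1 α₁ α₂ V₀ = sSup { r | ∃ V : ℝ × ℝ → ℝ, MemSp ppow M V ∧ r = lam1 α₁ α₂ V } ∧
      (∀ V : ℝ × ℝ → ℝ, MemSp ppow M V →
        lam1 α₁ α₂ V = sSup { r | ∃ W : ℝ × ℝ → ℝ, MemSp ppow M W ∧ r = lam1 α₁ α₂ W } →
        (∀ᵐ p ∂(volume.restrict Omega), V p = V₀ p)) := by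
  intro V₀ hV
  obtain ⟨hH, hLp, hne⟩ := hmemU
  have h1 := hα₁.1
  have h2 := hα₂.1
  have hpq : ppow.HolderConjugate qe := by
    rw [Real.holderConjugate_iff]
    refine ⟨hp, ?_⟩
    have a : ppow ≠ 0 := by linarith
    have b : ppow - 1 ≠ 0 := by linarith
    rw [hq]
    field_simp
    ring
  have hq1 : 1 < qe := hpq.symm.lt
  have hmpos : ∀ {v : ℝ × ℝ → ℝ}, MemLp v 2 (volume.restrict Omega) →
      ¬ (∀ᵐ p ∂(volume.restrict Omega), v p = 0) → 0 < ∫ p in Omega, v p ^ 2 := by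
    intro v hv hn
    refine lt_of_le_of_ne (integral_nonneg fun p => sq_nonneg _) fun h0 => hn ?_
    have := (integral_eq_zero_iff_of_nonneg (fun p => sq_nonneg (v p)) hv.integrable_sq).1 h0.symm
    filter_upwards [this] with p hp'
    simpa using hp'
  have hm := hmpos hH.1.memL2 hne
  have hInt := memLp_abs_rpow (by linarith : 0 < 2 * qe) hLp
  have hI : 0 < ∫ p in Omega, |u₀ p| ^ (2 * qe) := by
    refine lt_of_le_of_ne (integral_nonneg fun p => by positivity) fun h0 => hne ?_
    have := (integral_eq_zero_iff_of_nonneg (fun p => by positivity) hInt).1 h0.symm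
    filter_upwards [this] with p hp'
    have h3 : |u₀ p| ^ (2 * qe) = 0 := hp'
    rw [Real.rpow_eq_zero (abs_nonneg _) (by linarith)] at h3
    simpa using h3
  have hJ : Jfun α₁ α₂ M qe u₀ g₀x g₀y * (∫ p in Omega, u₀ p ^ 2) =
      En α₁ α₂ g₀x g₀y + M * (∫ p in Omega, |u₀ p| ^ (2 * qe)) ^ (1 / qe) := by
    unfold Jfun
    rw [a1Form_self, div_mul_cancel₀ _ hm.ne']
  obtain ⟨c, hcdef⟩ : ∃ c, c = Jfun α₁ α₂ M qe u₀ g₀x g₀y := ⟨_, rfl⟩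
  rw [← hcdef] at hJ hmin ⊢
  have H : TestIneq α₁ α₂ c M qe := by
    intro ψ hψ
    by_cases hn : ∀ᵐ p ∂(volume.restrict Omega), ψ p = 0
    · have h0 : (∫ p in Omega, ψ p ^ 2) = 0 := by
        rw [integral_congr_ae (g := fun _ => (0 : ℝ)) (by filter_upwards [hn] with p hp'; simp [hp'])]
        simp
      rw [h0, mul_zero]
      have := En_nonneg α₁ α₂ (pdx ψ) (pdy ψ)
      have h4 : 0 ≤ ∫ p in Omega, |ψ p| ^ (2 * qe) := integral_nonneg fun p => by positivity
      positivity
    · have := hmin ψ (pdx ψ) (pdy ψ) ⟨hψ.memH10 h1 h2, hψ.memLp _, hn⟩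
      unfold Jfun at this
      rwa [a1Form_self, le_div_iff₀ (hmpos (hψ.memLp 2) hn)] at this
  obtain ⟨f1, f2, f3, f4⟩ := V0_facts hpq hM hLp hI hV
  have hS : MemSp ppow M V₀ := ⟨f1, ae_of_all _ f2, f3.le⟩
  have hc : ∀ w wx wy, MemH0 α₁ α₂ V₀ w wx wy →
      c * (∫ p in Omega, w p ^ 2) ≤ En α₁ α₂ wx wy + ∫ p in Omega, V₀ p * w p ^ 2 :=
    fun w wx wy hw => bound_all h1 h2 hM hq1 H hH hInt hI hJ hw.1 hV hw.2
  have hu0 : MemH0 α₁ α₂ V₀ u₀ g₀x g₀y := ⟨hH, VS_int hpq f1 hLp⟩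
  have hle : ∀ V, MemSp ppow M V → lam1 α₁ α₂ V * (∫ p in Omega, u₀ p ^ 2) ≤
      En α₁ α₂ g₀x g₀y + ∫ p in Omega, V p * u₀ p ^ 2 := fun V hVS =>
    lam1_le h1 h2 ⟨hH, VS_int hpq hVS.1 hLp⟩ hVS.2.1 hm
  have hub : ∀ V, MemSp ppow M V → lam1 α₁ α₂ V ≤ c := by
    intro V hVS
    have a := hle V hVS
    have b := (holder_eq hpq hM hVS hLp hI).1
    exact le_of_mul_le_mul_right (by linarith) hm
  have hl : lam1 α₁ α₂ V₀ = c := le_antisymm (hub V₀ hS) (le_lam1 h1 h2 hu0 hm hc)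
  have hsup : sSup { r | ∃ V : ℝ × ℝ → ℝ, MemSp ppow M V ∧ r = lam1 α₁ α₂ V } = c := by
    apply IsGreatest.csSup_eq
    refine ⟨⟨V₀, hS, hl.symm⟩, ?_⟩
    rintro r ⟨V, hVS, rfl⟩
    exact hub V hVS
  refine ⟨hS, f3, ?_, hl, by rw [hl, hsup], ?_⟩
  · intro w wx wy hw hwL
    rw [hl]
    exact euler_lagrange h1 h2 f1.1 f2 hu0 ⟨hw, VS_int hpq f1 hwL⟩ (by rw [hJ, f4]) hc
  · intro V hVS hVe
    rw [hsup] at hVe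
    have a := hle V hVS
    have b := holder_eq hpq hM hVS hLp hI
    rw [hVe, hJ] at a
    have := b.2 (le_antisymm b.1 (by linarith))
    rw [hV]
    exact this
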